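/- Let X be a smooth extremal surface of degree d = q+1 in ℙ³(k), and let (A, B) be a double 2d all of whose 4d lines lie on X. If d > 10 or d < 5, then the 4d lines of A ∪ B can be partitioned into two quadric configurations on X. Moreover, for d ≥ 5, if the lines of a double 2d on X are the union of two quadric configurations, then this pair of quadric configurations is unique: no other pair of quadric configurations on X has the same union. -/

import Mathlib

open Module

/-! Basic setup: `k` is an algebraically closed field of characteristic `p > 0`,
`q = p^e`.  We model ℙ³(k) via linear subspaces of `k⁴ = Fin 4 → k`:
points, lines and planes of ℙ³(k) are subspaces of dimension 1, 2 and 3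
respectively.  A hypersurface cut out by a homogeneous form is recorded by its
affine cone in `k⁴`. -/

/-- The Frobenius form in 4 variables determined by a 4×4 matrix `A`:
`∑ i j, A i j * x i ^ q * x j`, a homogeneous form of degree `q+1`. -/
def frobForm {k : Type*} [Field k] (q : ℕ) (A : Matrix (Fin 4) (Fin 4) k)
    (x : Fin 4 → k) : k :=
  ∑ i, ∑ j, A i j * x i ^ q * x j

/-- The affine cone in `k⁴` of the extremal surface in ℙ³(k) cut out by the
Frobenius form with matrix `A`; a point of ℙ³(k) lies on the surface iff its
homogeneous coordinate representatives lie in this set. -/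
def extremalCone (k : Type*) [Field k] (q : ℕ) (A : Matrix (Fin 4) (Fin 4) k) :
    Set (Fin 4 → k) :=
  {x | frobForm q A x = 0}

/-- A point of ℙ³(k): a 1-dimensional subspace of `k⁴`. -/
def IsPoint {k : Type*} [Field k] (c : Submodule k (Fin 4 → k)) : Prop :=
  finrank k c = 1

/-- A line of ℙ³(k): a 2-dimensional subspace of `k⁴`. -/
def IsLine {k : Type*} [Field k] (L : Submodule k (Fin 4 → k)) : Prop :=
  finrank k L = 2

/-- A plane of ℙ³(k): a 3-dimensional subspace of `k⁴`. -/
def IsPlane {k : Type*} [Field k] (H : Submodule k (Fin 4 → k)) : Prop :=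
  finrank k H = 3

/-- `L` is a line lying on the surface with affine cone `X`. -/
def IsLineOn {k : Type*} [Field k] (X : Set (Fin 4 → k))
    (L : Submodule k (Fin 4 → k)) : Prop :=
  IsLine L ∧ (L : Set (Fin 4 → k)) ⊆ X

/-- Two lines of ℙ³(k) meet iff the corresponding subspaces of `k⁴` intersect
nontrivially. -/
def MeetsLine {k : Type*} [Field k] (L M : Submodule k (Fin 4 → k)) : Prop :=
  L ⊓ M ≠ ⊥

/-- Two lines of ℙ³(k) are skew iff the corresponding subspaces of `k⁴`
intersect trivially. -/
def SkewLine {k : Type*} [Field k] (L M : Submodule k (Fin 4 → k)) : Prop :=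
  L ⊓ M = ⊥

/-- `IsStarAt q X S c`: `S` is a star on the surface with affine cone `X`,
centered at the point `c`, i.e. a set of `q+1` distinct lines on the surface
all passing through `c`. -/
def IsStarAt {k : Type*} [Field k] (q : ℕ) (X : Set (Fin 4 → k))
    (S : Set (Submodule k (Fin 4 → k))) (c : Submodule k (Fin 4 → k)) : Prop :=
  IsPoint c ∧ S.ncard = q + 1 ∧ ∀ L ∈ S, IsLineOn X L ∧ c ≤ L

/-- `S` is a star on the surface with affine cone `X`. -/
def IsStar {k : Type*} [Field k] (q : ℕ) (X : Set (Fin 4 → k))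
    (S : Set (Submodule k (Fin 4 → k))) : Prop :=
  ∃ c, IsStarAt q X S c

/-- `c` is a star point of the surface with affine cone `X`. -/
def IsStarPoint {k : Type*} [Field k] (q : ℕ) (X : Set (Fin 4 → k))
    (c : Submodule k (Fin 4 → k)) : Prop :=
  ∃ S, IsStarAt q X S c

/-- `H` is a star plane of the surface with affine cone `X`, centered at `c`:
the plane section `X ∩ H` is the union of a star centered at `c`. -/
def IsStarPlaneAt {k : Type*} [Field k] (q : ℕ) (X : Set (Fin 4 → k))
    (H c : Submodule k (Fin 4 → k)) : Prop :=
  IsPlane H ∧ ∃ S, IsStarAt q X S c ∧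
    X ∩ (H : Set (Fin 4 → k)) = ⋃ L ∈ S, (L : Set (Fin 4 → k))

/-- An element of `Aut(X)`: since every projective linear automorphism of
ℙ³(k) is represented by an invertible linear map of `k⁴` (uniquely up to
scalars, which act trivially on subspaces and preserve every cone), `g ∈
PGL(4,k)` with `g(X) = X` corresponds to a linear automorphism of `k⁴`
mapping the affine cone `X` onto itself. -/
def PreservesCone {k : Type*} [Field k] (X : Set (Fin 4 → k))
    (g : (Fin 4 → k) ≃ₗ[k] (Fin 4 → k)) : Prop :=
  (⇑g) '' X = X

/-- A double `2d`: a pair of sets `𝒜`, `ℬ`, each consisting of `2d` lines in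
ℙ³(k), such that the lines within `𝒜` are pairwise skew, the lines within `ℬ`
are pairwise skew, each line of `𝒜` meets exactly `d+2` lines of `ℬ`, and
each line of `ℬ` meets exactly `d+2` lines of `𝒜`. -/
def IsDoubleTwoD {k : Type*} [Field k] (d : ℕ)
    (𝒜 ℬ : Set (Submodule k (Fin 4 → k))) : Prop :=
  𝒜.ncard = 2 * d ∧ ℬ.ncard = 2 * d ∧
  (∀ L ∈ 𝒜, IsLine L) ∧ (∀ L ∈ ℬ, IsLine L) ∧
  (∀ L ∈ 𝒜, ∀ M ∈ 𝒜, L ≠ M → SkewLine L M) ∧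
  (∀ L ∈ ℬ, ∀ M ∈ ℬ, L ≠ M → SkewLine L M) ∧
  (∀ L ∈ 𝒜, {M ∈ ℬ | MeetsLine L M}.ncard = d + 2) ∧
  (∀ M ∈ ℬ, {L ∈ 𝒜 | MeetsLine L M}.ncard = d + 2)

/-- A quadric configuration on the surface with affine cone `X` (of degree
`d`): a set of `2d` lines on the surface that is the union of two sets of `d`
pairwise skew lines such that every line of either set meets every line of
the other set. -/
def IsQuadricConfig {k : Type*} [Field k] (d : ℕ) (X : Set (Fin 4 → k))
    (S : Set (Submodule k (Fin 4 → k))) : Prop :=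
  S.ncard = 2 * d ∧ (∀ L ∈ S, IsLineOn X L) ∧
  ∃ ℒ ℳ : Set (Submodule k (Fin 4 → k)),
    S = ℒ ∪ ℳ ∧ ℒ.ncard = d ∧ ℳ.ncard = d ∧
    (∀ L ∈ ℒ, ∀ M ∈ ℒ, L ≠ M → SkewLine L M) ∧
    (∀ L ∈ ℳ, ∀ M ∈ ℳ, L ≠ M → SkewLine L M) ∧
    (∀ L ∈ ℒ, ∀ M ∈ ℳ, MeetsLine L M)

/-! The projection of `k⁴` onto a line `L₁` along a skew line `L₂` leaves every transversal of
`L₁` and `L₂` invariant. If three skew lines meet three skew lines, the projections attached to two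
lines of each family commute; as a consequence, a transversal of the first three lines meets every
transversal of the other three (the sixteen points theorem). On an extremal surface, the
transversals of three skew lines correspond to isotropic points of a nondegenerate Frobenius form in
two variables, so there are at most `d = q + 1` of them.

A maximal biclique with at least three lines on each side therefore has at most `d` lines on each
side, and every line outside it meets at most two of its lines; counting incidences forces both
sides to have `d` lines as soon as one side has at least `min 5 d`, and then the remaining lines
form a biclique as well. For `d > 10`, averaging over triples of lines gives three lines with five
common transversals; for `d < 5`, three suitable lines fail to meet at most `d` lines of the other
family. Finally, two bicliques of `d` by `d` lines sharing three lines of one family coincide. -/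

section Incidence

open Finset Function

variable {α β : Type*} {R : α → β → Prop} {d : ℕ} {A S P P' : Finset α} {B T Q Q' : Finset β}

/-- Every element of `S` is related to every element of `T`: a complete bipartite subgraph of
the bipartite graph of `R`. -/
def IsBiclique (R : α → β → Prop) (S : Finset α) (T : Finset β) : Prop :=
  ∀ a ∈ S, ∀ b ∈ T, R a b

theorem IsBiclique.swap (h : IsBiclique R S T) : IsBiclique (swap R) T S :=
  fun b hb a ha => h a ha b hb

variable [DecidableRel R]

/-- The common neighbours in `B` of the elements of `S`, in the bipartite graph of `R`. The common
neighbours of a set on the other side are obtained from the relation `Function.swap R`. -/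
def commonNeighbors (R : α → β → Prop) [DecidableRel R] (B : Finset β) (S : Finset α) :
    Finset β :=
  {b ∈ B | ∀ a ∈ S, R a b}

theorem mem_commonNeighbors {b : β} : b ∈ commonNeighbors R B S ↔ b ∈ B ∧ ∀ a ∈ S, R a b :=
  mem_filter

theorem commonNeighbors_subset : commonNeighbors R B S ⊆ B :=
  filter_subset _ _

theorem commonNeighbors_anti (h : P ⊆ S) : commonNeighbors R B S ⊆ commonNeighbors R B P :=
  fun _ hb => mem_commonNeighbors.2
    ⟨(mem_commonNeighbors.1 hb).1, fun a ha => (mem_commonNeighbors.1 hb).2 a (h ha)⟩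

theorem IsBiclique.subset_commonNeighbors (h : IsBiclique R S T) (hT : T ⊆ B) :
    T ⊆ commonNeighbors R B S :=
  fun b hb => mem_commonNeighbors.2 ⟨hT hb, fun a ha => h a ha b hb⟩

/-- A pair of sets each of which consists of all common neighbours of the other one, that is, a
biclique that is maximal for inclusion. -/
structure IsMaximalBiclique (R : α → β → Prop) [DecidableRel R] (A : Finset α) (B : Finset β)
    (S : Finset α) (T : Finset β) : Prop where
  eq_left : S = commonNeighbors (swap R) A T
  eq_right : T = commonNeighbors R B S

namespace IsMaximalBiclique

theorem swap (h : IsMaximalBiclique R A B S T) : IsMaximalBiclique (swap R) B A T S :=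
  ⟨h.eq_right, h.eq_left⟩

theorem subset_left (h : IsMaximalBiclique R A B S T) : S ⊆ A :=
  h.eq_left ▸ commonNeighbors_subset

theorem subset_right (h : IsMaximalBiclique R A B S T) : T ⊆ B :=
  h.swap.subset_left

theorem isBiclique (h : IsMaximalBiclique R A B S T) : IsBiclique R S T :=
  fun a ha _ hb => (mem_commonNeighbors.1 (h.eq_right ▸ hb)).2 a ha

theorem of_commonNeighbors (hS : S ⊆ A) : IsMaximalBiclique R A B
    (commonNeighbors (Function.swap R) A (commonNeighbors R B S)) (commonNeighbors R B S) where
  eq_left := rfl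
  eq_right := by
    ext b
    simp only [mem_commonNeighbors]
    exact ⟨fun h => ⟨h.1, fun a ha => ha.2 b h⟩,
      fun h => ⟨h.1, fun a ha => h.2 a ⟨hS ha, fun b' hb' => hb'.2 a ha⟩⟩⟩

end IsMaximalBiclique

/-- The combinatorial shadow of a double `2d`: a bipartite graph with `2 * d` vertices on either
side in which every vertex has degree `d + 2`. -/
structure IsDoubleIncidence (d : ℕ) (R : α → β → Prop) [DecidableRel R] (A : Finset α)
    (B : Finset β) : Prop where
  card_left : #A = 2 * d
  card_right : #B = 2 * d
  card_bipartiteAbove : ∀ a ∈ A, #(B.bipartiteAbove R a) = d + 2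
  card_bipartiteBelow : ∀ b ∈ B, #(A.bipartiteBelow R b) = d + 2

/-- The combinatorial shadow of two families of skew lines on a surface of degree `d`: three lines
have at most `d` common transversals, and if `S` and `T` are triples of lines that meet mutually,
then every transversal of `T` meets every transversal of `S` (both lie on the quadric through
`S`). -/
structure IsRegulusIncidence (d : ℕ) (R : α → β → Prop) [DecidableRel R] (A : Finset α)
    (B : Finset β) : Prop where
  card_commonNeighbors_le : ∀ S ⊆ A, #S = 3 → #(commonNeighbors R B S) ≤ d
  card_commonNeighbors_swap_le : ∀ T ⊆ B, #T = 3 → #(commonNeighbors (swap R) A T) ≤ d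
  isBiclique_commonNeighbors : ∀ S ⊆ A, ∀ T ⊆ B, #S = 3 → #T = 3 → IsBiclique R S T →
    IsBiclique R (commonNeighbors (swap R) A T) (commonNeighbors R B S)

theorem IsDoubleIncidence.swap (h : IsDoubleIncidence d R A B) :
    IsDoubleIncidence d (swap R) B A :=
  ⟨h.card_right, h.card_left, h.card_bipartiteBelow, h.card_bipartiteAbove⟩

namespace IsRegulusIncidence

theorem swap (h : IsRegulusIncidence d R A B) : IsRegulusIncidence d (swap R) B A :=
  ⟨h.card_commonNeighbors_swap_le, h.card_commonNeighbors_le, fun T hT S hS cT cS hTS =>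
    (h.isBiclique_commonNeighbors S hS T hT cS cT hTS.swap).swap⟩

theorem card_right_le (h : IsRegulusIncidence d R A B) (hST : IsMaximalBiclique R A B S T)
    (hS : 3 ≤ #S) : #T ≤ d := by
  obtain ⟨S₀, hS₀, hcard⟩ := exists_subset_card_eq hS
  calc #T = #(commonNeighbors R B S) := congrArg card hST.eq_right
    _ ≤ #(commonNeighbors R B S₀) := card_le_card (commonNeighbors_anti hS₀)
    _ ≤ d := h.card_commonNeighbors_le S₀ (hS₀.trans hST.subset_left) hcard

theorem card_bipartiteAbove_le_two [DecidableEq α] (h : IsRegulusIncidence d R A B)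
    (hST : IsMaximalBiclique R A B S T) (hS : 3 ≤ #S) {a : α} (ha : a ∈ A \ S) :
    #(T.bipartiteAbove R a) ≤ 2 := by
  rw [mem_sdiff] at ha
  by_contra! hcard
  obtain ⟨T₁, hT₁, cT₁⟩ := exists_subset_card_eq (show 3 ≤ #(T.bipartiteAbove R a) from hcard)
  obtain ⟨S₁, hS₁, cS₁⟩ := exists_subset_card_eq hS
  have hT₁T : T₁ ⊆ T := hT₁.trans (filter_subset _ _)
  have hclosed := h.isBiclique_commonNeighbors S₁ (hS₁.trans hST.subset_left) T₁
    (hT₁T.trans hST.subset_right) cS₁ cT₁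
    fun a' ha' b hb => hST.isBiclique a' (hS₁ ha') b (hT₁T hb)
  have haT₁ : a ∈ commonNeighbors (Function.swap R) A T₁ :=
    mem_commonNeighbors.2 ⟨ha.1, fun b hb => (mem_bipartiteAbove R).1 (hT₁ hb) |>.2⟩
  refine ha.2 (hST.eq_left ▸ mem_commonNeighbors.2 ⟨ha.1, fun b hb => hclosed a haT₁ b ?_⟩)
  exact commonNeighbors_anti hS₁ (hST.eq_right ▸ hb)

theorem commonNeighbors_eq (h : IsRegulusIncidence d R A B) (hS : S ⊆ A) (cS : #S = 3)
    (hQ : Q ⊆ B) (cQ : #Q = d) (hSQ : IsBiclique R S Q) : commonNeighbors R B S = Q :=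
  (eq_of_subset_of_card_le (hSQ.subset_commonNeighbors hQ)
    (cQ ▸ h.card_commonNeighbors_le S hS cS)).symm

theorem right_unique (h : IsRegulusIncidence d R A B) (hP : P ⊆ A) (hQ : Q ⊆ B) (hQ' : Q' ⊆ B)
    (cQ : #Q = d) (cQ' : #Q' = d) (hPQ : IsBiclique R P Q) (hPQ' : IsBiclique R P Q')
    (cP : 3 ≤ #P) : Q = Q' := by
  obtain ⟨S, hS, cS⟩ := exists_subset_card_eq cP
  rw [← h.commonNeighbors_eq (hS.trans hP) cS hQ cQ fun a ha => hPQ a (hS ha),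
    h.commonNeighbors_eq (hS.trans hP) cS hQ' cQ' fun a ha => hPQ' a (hS ha)]

theorem biclique_unique [DecidableEq α] (h : IsRegulusIncidence d R A B) (hd : 3 ≤ d)
    (hP : P ⊆ A) (hP' : P' ⊆ A) (hQ : Q ⊆ B) (hQ' : Q' ⊆ B)
    (cP : #P = d) (cP' : #P' = d) (cQ : #Q = d) (cQ' : #Q' = d)
    (hPQ : IsBiclique R P Q) (hPQ' : IsBiclique R P' Q') (hinter : 3 ≤ #(P ∩ P')) :
    P = P' ∧ Q = Q' := by
  obtain rfl : Q = Q' := h.right_unique (inter_subset_left.trans hP) hQ hQ' cQ cQ'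
    (fun a ha => hPQ a (mem_of_mem_inter_left ha))
    (fun a ha => hPQ' a (mem_of_mem_inter_right ha)) hinter
  exact ⟨h.swap.right_unique hQ hP hP' cP cP' hPQ.swap hPQ'.swap (cQ ▸ hd), rfl⟩

end IsRegulusIncidence

theorem mul_card_le_of_card_bipartiteAbove_le [DecidableEq α] {m n : ℕ} (hS : S ⊆ A)
    (hdeg : ∀ b ∈ T, #(A.bipartiteBelow R b) = n)
    (hout : ∀ a ∈ A \ S, #(T.bipartiteAbove R a) ≤ m) :
    #T * n ≤ #S * #T + #(A \ S) * m := by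
  calc #T * n = ∑ a ∈ A, #(T.bipartiteAbove R a) := by
        rw [sum_card_bipartiteAbove_eq_sum_card_bipartiteBelow, sum_const_nat hdeg]
    _ = ∑ a ∈ S, #(T.bipartiteAbove R a) + ∑ a ∈ A \ S, #(T.bipartiteAbove R a) := by
        rw [add_comm, sum_sdiff hS]
    _ ≤ #S * #T + #(A \ S) * m :=
        add_le_add (sum_le_card_nsmul _ _ _ fun a _ => card_filter_le _ _)
          (sum_le_card_nsmul _ _ _ hout)

theorem eq_of_biclique_bounds {s t : ℕ} (hs : 3 ≤ s) (hsd : s ≤ d) (htd : t ≤ d)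
    (ht : min 5 d ≤ t) (h₁ : t * (d + 2) ≤ s * t + (2 * d - s) * 2)
    (h₂ : s * (d + 2) ≤ t * s + (2 * d - t) * 2) : s = d ∧ t = d := by
  obtain ⟨x, rfl⟩ := Nat.exists_eq_add_of_le hsd
  obtain ⟨y, hy⟩ := Nat.exists_eq_add_of_le htd
  -- `x = d - s` and `y = d - t` satisfy `(t - 2) * x ≤ 2 * y` and `(s - 2) * y ≤ 2 * x`.
  have hx' : t * x ≤ 2 * x + 2 * y := by
    rw [show 2 * (s + x) - s = s + 2 * x by omega] at h₁
    nlinarith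
  have hy' : s * y ≤ 2 * x + 2 * y := by
    rw [show 2 * (s + x) - t = t + 2 * y by omega, hy] at h₂
    nlinarith
  suffices x = 0 ∧ y = 0 by omega
  rcases Nat.eq_zero_or_pos y with rfl | hy0
  · exact ⟨by nlinarith, rfl⟩
  · have ht5 : 5 ≤ t := by omega
    have hxy : x < y := by nlinarith
    have : 6 ≤ s := by omega
    nlinarith

theorem IsDoubleIncidence.isBiclique_sdiff [DecidableEq α] [DecidableEq β]
    (H : IsDoubleIncidence d R A B) (hS : S ⊆ A) (cS : #S = d)
    (hout : ∀ b ∈ B \ T, #(S.bipartiteBelow R b) ≤ 2) : IsBiclique R (A \ S) (B \ T) := by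
  intro a ha b hb
  have hsplit : #(A.bipartiteBelow R b) =
      #((A \ S).bipartiteBelow R b) + #(S.bipartiteBelow R b) := by
    rw [bipartiteBelow, bipartiteBelow, bipartiteBelow, ← card_union_of_disjoint
      (disjoint_filter_filter sdiff_disjoint), ← filter_union, sdiff_union_of_subset hS]
  have hcard : #(A \ S) ≤ #((A \ S).bipartiteBelow R b) := by
    have := H.card_bipartiteBelow b (mem_sdiff.1 hb).1
    have := hout b hb
    rw [card_sdiff_of_subset hS, H.card_left]
    omega
  rw [← eq_of_subset_of_card_le (filter_subset _ _) hcard] at ha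
  exact ((mem_bipartiteBelow R).1 ha).2

theorem IsDoubleIncidence.exists_biclique_partition_of_triple [DecidableEq α] [DecidableEq β]
    (H : IsDoubleIncidence d R A B) (h : IsRegulusIncidence d R A B) (hd : 3 ≤ d)
    (htriple : ∃ S₀ ⊆ A, #S₀ = 3 ∧ min 5 d ≤ #(commonNeighbors R B S₀)) :
    ∃ S ⊆ A, ∃ T ⊆ B, #S = d ∧ #T = d ∧ IsBiclique R S T ∧ IsBiclique R (A \ S) (B \ T) := by
  obtain ⟨S₀, hS₀, cS₀, hT⟩ := htriple
  have hST := IsMaximalBiclique.of_commonNeighbors (R := R) (B := B) hS₀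
  set T := commonNeighbors R B S₀
  set S := commonNeighbors (Function.swap R) A T
  have hS : 3 ≤ #S := cS₀ ▸ card_le_card
    (IsBiclique.subset_commonNeighbors (fun b hb => (mem_commonNeighbors.1 hb).2) hS₀)
  have hT₃ : 3 ≤ #T := by omega
  have hA : ∀ a ∈ A \ S, #(T.bipartiteAbove R a) ≤ 2 := fun a =>
    h.card_bipartiteAbove_le_two hST hS
  have hB : ∀ b ∈ B \ T, #(S.bipartiteBelow R b) ≤ 2 := fun b =>
    h.swap.card_bipartiteAbove_le_two hST.swap hT₃
  have edgesT := mul_card_le_of_card_bipartiteAbove_le hST.subset_left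
    (fun b hb => H.card_bipartiteBelow b (hST.subset_right hb)) hA
  have edgesS := mul_card_le_of_card_bipartiteAbove_le (R := Function.swap R) hST.subset_right
    (fun a ha => H.card_bipartiteAbove a (hST.subset_left ha)) hB
  rw [card_sdiff_of_subset hST.subset_left, H.card_left] at edgesT
  rw [card_sdiff_of_subset hST.subset_right, H.card_right] at edgesS
  obtain ⟨cS, cT⟩ := eq_of_biclique_bounds hS (h.swap.card_right_le hST.swap hT₃)
    (h.card_right_le hST hS) hT edgesT edgesS
  exact ⟨S, hST.subset_left, T, hST.subset_right, cS, cT, hST.isBiclique,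
    H.isBiclique_sdiff hST.subset_left cS hB⟩

theorem sum_card_commonNeighbors_powersetCard (A : Finset α) (B : Finset β) (m : ℕ) :
    ∑ S ∈ A.powersetCard m, #(commonNeighbors R B S) =
      ∑ b ∈ B, (#(A.bipartiteBelow R b)).choose m := by
  rw [show ∑ S ∈ A.powersetCard m, #(commonNeighbors R B S) =
      ∑ S ∈ A.powersetCard m, #(B.bipartiteAbove (fun S b => ∀ a ∈ S, R a b) S) from rfl,
    sum_card_bipartiteAbove_eq_sum_card_bipartiteBelow]
  refine sum_congr rfl fun b _ => ?_
  rw [← card_powersetCard]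
  congr 1
  ext S
  simp only [mem_bipartiteBelow, mem_powersetCard, subset_iff]
  exact ⟨fun h => ⟨fun a ha => ⟨h.1.1 ha, h.2 a ha⟩, h.1.2⟩,
    fun h => ⟨⟨fun a ha => (h.1 ha).1, h.2⟩, fun a ha => (h.1 ha).2⟩⟩

theorem six_mul_add_two_choose_three (n : ℕ) : 6 * (n + 2).choose 3 = (n + 2) * (n + 1) * n := by
  have h := Nat.descFactorial_eq_factorial_mul_choose (n + 2) 3
  simp only [Nat.descFactorial_succ, Nat.descFactorial_zero] at h
  norm_num [Nat.factorial] at h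
  rw [← h]
  ring

theorem IsDoubleIncidence.exists_five_le_card_commonNeighbors (H : IsDoubleIncidence d R A B)
    (hd : 10 < d) : ∃ S ⊆ A, #S = 3 ∧ 5 ≤ #(commonNeighbors R B S) := by
  by_contra! hlt
  have hcount := calc
    2 * d * (d + 2).choose 3 = ∑ S ∈ A.powersetCard 3, #(commonNeighbors R B S) := by
      rw [sum_card_commonNeighbors_powersetCard, sum_const_nat fun b hb => by
        rw [H.card_bipartiteBelow b hb], H.card_right]
    _ ≤ #(A.powersetCard 3) * 4 := sum_le_card_nsmul _ _ _ fun S hS =>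
      Nat.le_of_lt_succ (hlt S (mem_powersetCard.1 hS).1 (mem_powersetCard.1 hS).2)
    _ = (2 * d).choose 3 * 4 := by rw [card_powersetCard, H.card_left]
  obtain ⟨m, rfl⟩ := Nat.exists_eq_add_of_lt hd
  have h₁ := six_mul_add_two_choose_three (10 + m + 1)
  have h₂ := six_mul_add_two_choose_three (2 * m + 20)
  rw [show 2 * m + 20 + 2 = 2 * (10 + m + 1) by ring] at h₂
  have hpoly : 2 * (10 + m + 1) * ((10 + m + 1 + 2) * (10 + m + 1 + 1) * (10 + m + 1)) ≤
      2 * (10 + m + 1) * (2 * m + 20 + 1) * (2 * m + 20) * 4 := by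
    rw [← h₁, ← h₂]
    linarith
  nlinarith [Nat.zero_le (m ^ 3)]

theorem card_union_lt_of_not_disjoint [DecidableEq β] {s t : Finset β} (h : ¬Disjoint s t) :
    #(s ∪ t) < #s + #t := by
  have := card_pos.2 (not_disjoint_iff_nonempty_inter.1 h)
  have := card_union_add_card_inter s t
  omega

theorem card_union_union_le_four_of_not_disjoint [DecidableEq β] {s t u : Finset β} (hs : #s = 2)
    (ht : #t = 2) (hu : #u = 2) (hst : ¬Disjoint s t) (hstu : ¬Disjoint (s ∪ t) u) :
    #(s ∪ t ∪ u) ≤ 4 := by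
  have := card_union_lt_of_not_disjoint hst
  have := card_union_lt_of_not_disjoint hstu
  omega

theorem exists_card_biUnion_bipartiteAbove_le_four [DecidableEq β]
    (hA : ∀ a ∈ A, #(B.bipartiteAbove R a) = 2) (hB : ∀ b ∈ B, #(A.bipartiteBelow R b) = 2)
    (cA : 3 ≤ #A) : ∃ S ⊆ A, #S = 3 ∧ #(S.biUnion fun a => B.bipartiteAbove R a) ≤ 4 := by
  classical
  set N : α → Finset β := fun a => B.bipartiteAbove R a
  obtain ⟨a₀, ha₀⟩ : A.Nonempty := card_pos.1 (by omega)
  obtain ⟨b, hb⟩ : (N a₀).Nonempty := card_pos.1 (by rw [hA a₀ ha₀]; norm_num)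
  have hb : b ∈ B := filter_subset _ _ hb
  obtain ⟨a₁, a₂, hne, hab⟩ := card_eq_two.1 (hB b hb)
  simp only [Finset.ext_iff, mem_bipartiteBelow, mem_insert, mem_singleton] at hab
  obtain ⟨ha₁, hb₁⟩ := (hab a₁).2 (.inl rfl)
  obtain ⟨ha₂, hb₂⟩ := (hab a₂).2 (.inr rfl)
  suffices ∃ a₃ ∈ A, a₃ ≠ a₁ ∧ a₃ ≠ a₂ ∧ #(N a₁ ∪ N a₂ ∪ N a₃) ≤ 4 by
    obtain ⟨a₃, ha₃, h₃₁, h₃₂, hcard⟩ := this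
    refine ⟨{a₁, a₂, a₃}, by simp [insert_subset_iff, ha₁, ha₂, ha₃],
      card_eq_three.2 ⟨a₁, a₂, a₃, hne, h₃₁.symm, h₃₂.symm, rfl⟩, ?_⟩
    simpa only [biUnion_insert, singleton_biUnion, ← union_assoc] using hcard
  by_cases hN : N a₁ ⊆ N a₂
  · obtain ⟨a₃, ha₃, hne₃⟩ := exists_mem_notMem_of_card_lt_card
      (show #{a₁, a₂} < #A by rw [card_pair hne]; omega)
    simp only [mem_insert, mem_singleton, not_or] at hne₃
    refine ⟨a₃, ha₃, hne₃.1, hne₃.2, (card_union_le _ _).trans ?_⟩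
    rw [union_eq_right.2 hN, hA a₂ ha₂, hA a₃ ha₃]
  · obtain ⟨c, hc₁, hc₂⟩ := not_subset.1 hN
    have hc : c ∈ B ∧ R a₁ c := (mem_bipartiteAbove R).1 hc₁
    obtain ⟨a₃, ha₃, hne₃⟩ := exists_mem_ne (by rw [hB c hc.1]; norm_num) a₁
    rw [mem_bipartiteBelow] at ha₃
    have hc₃ : c ∈ N a₃ := (mem_bipartiteAbove R).2 ⟨hc.1, ha₃.2⟩
    have hb₁₂ : ¬Disjoint (N a₁) (N a₂) := not_disjoint_iff.2
      ⟨b, (mem_bipartiteAbove R).2 ⟨hb, hb₁⟩, (mem_bipartiteAbove R).2 ⟨hb, hb₂⟩⟩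
    exact ⟨a₃, ha₃.1, hne₃, fun h => hc₂ (h ▸ hc₃),
      card_union_union_le_four_of_not_disjoint (hA a₁ ha₁) (hA a₂ ha₂) (hA a₃ ha₃.1) hb₁₂
        (not_disjoint_iff.2 ⟨c, mem_union_left _ hc₁, hc₃⟩)⟩

theorem sdiff_biUnion_subset_commonNeighbors [DecidableEq β] :
    (B \ S.biUnion fun a => B.bipartiteAbove (fun a b => ¬R a b) a) ⊆ commonNeighbors R B S := by
  intro b hb
  simp only [mem_sdiff, mem_biUnion, mem_bipartiteAbove, not_exists, not_and, not_not] at hb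
  exact mem_commonNeighbors.2 ⟨hb.1, fun a ha => hb.2 a ha hb.1⟩

namespace IsDoubleIncidence

theorem card_bipartiteAbove_not (H : IsDoubleIncidence d R A B) {a : α} (ha : a ∈ A) :
    #(B.bipartiteAbove (fun a b => ¬R a b) a) = d - 2 := by
  have hsplit : #(B.bipartiteAbove R a) + #(B.bipartiteAbove (fun a b => ¬R a b) a) = #B :=
    card_filter_add_card_filter_not _
  rw [H.card_bipartiteAbove a ha, H.card_right] at hsplit
  omega

theorem exists_le_card_commonNeighbors (H : IsDoubleIncidence d R A B) (hd : 3 ≤ d)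
    (hd' : d < 5) : ∃ S ⊆ A, #S = 3 ∧ d ≤ #(commonNeighbors R B S) := by
  classical
  set N : α → Finset β := fun a => B.bipartiteAbove (fun a b => ¬R a b) a
  have hN : ∀ a ∈ A, #(N a) = d - 2 := fun a => H.card_bipartiteAbove_not
  suffices ∃ S ⊆ A, #S = 3 ∧ #(S.biUnion N) ≤ d by
    obtain ⟨S, hS, cS, hle⟩ := this
    refine ⟨S, hS, cS, ?_⟩
    have := (le_card_sdiff (S.biUnion N) B).trans
      (card_le_card sdiff_biUnion_subset_commonNeighbors)
    have := H.card_right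
    omega
  obtain rfl | rfl : d = 3 ∨ d = 4 := by omega
  · obtain ⟨S, hS, cS⟩ := exists_subset_card_eq (show 3 ≤ #A by rw [H.card_left]; norm_num)
    refine ⟨S, hS, cS, card_biUnion_le.trans ?_⟩
    rw [sum_congr rfl fun a ha => hN a (hS ha)]
    simp [cS]
  · exact exists_card_biUnion_bipartiteAbove_le_four hN
      (fun b hb => H.swap.card_bipartiteAbove_not hb) (by rw [H.card_left]; norm_num)

theorem exists_biclique_partition [DecidableEq α] [DecidableEq β]
    (H : IsDoubleIncidence d R A B) (h : IsRegulusIncidence d R A B) (hd : 3 ≤ d)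
    (hd' : 10 < d ∨ d < 5) :
    ∃ S ⊆ A, ∃ T ⊆ B, #S = d ∧ #T = d ∧ IsBiclique R S T ∧ IsBiclique R (A \ S) (B \ T) := by
  refine H.exists_biclique_partition_of_triple h hd ?_
  rcases hd' with hd' | hd'
  · obtain ⟨S, hS, cS, hle⟩ := H.exists_five_le_card_commonNeighbors hd'
    exact ⟨S, hS, cS, (min_le_left _ _).trans hle⟩
  · obtain ⟨S, hS, cS, hle⟩ := H.exists_le_card_commonNeighbors hd hd'
    exact ⟨S, hS, cS, (min_le_right _ _).trans hle⟩

end IsDoubleIncidence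

end Incidence

section Lines

open Submodule Function

variable {k V : Type*} [Field k] [AddCommGroup V] [Module k V] {P Q W M : Submodule k V} {w x y : V}

theorem exists_mem_mem_ne_zero_of_not_disjoint (h : ¬Disjoint P Q) : ∃ x ∈ P, x ∈ Q ∧ x ≠ 0 := by
  simpa [disjoint_def] using h

theorem linearIndependent_pair_of_disjoint (h : Disjoint P Q) (hx : x ∈ P) (hy : y ∈ Q)
    (hx₀ : x ≠ 0) (hy₀ : y ≠ 0) : LinearIndependent k ![x, y] :=
  (LinearIndependent.pair_iff' hx₀).2 fun a ha =>
    hy₀ (disjoint_def.1 h y (ha ▸ P.smul_mem a hx) hy)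

theorem eq_span_pair (hM : finrank k M = 2) (hx : x ∈ M) (hy : y ∈ M)
    (hxy : LinearIndependent k ![x, y]) : M = span k {x, y} := by
  have : FiniteDimensional k M := Module.finite_of_finrank_eq_succ hM
  refine (eq_of_le_of_finrank_le (span_le.2 (Set.pair_subset hx hy)) ?_).symm
  have hspan := finrank_span_eq_card hxy
  rw [Matrix.range_cons_cons_empty] at hspan
  rw [hM, hspan, Fintype.card_fin]

theorem linearIndependent_projection (hPQ : IsCompl P Q) (hP : Disjoint W P) (hQ : Disjoint W Q)
    (hw : w ∈ W) (hw₀ : w ≠ 0) : LinearIndependent k ![w, P.projection Q hPQ w] :=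
  linearIndependent_pair_of_disjoint hP hw (projection_apply_mem hPQ w) hw₀ fun h =>
    hw₀ (disjoint_def.1 hQ w hw ((projection_apply_eq_zero_iff hPQ).1 h))

theorem mem_invtSubmodule_projection (hPQ : IsCompl P Q) (hM : finrank k M = 2)
    (hMP : ¬Disjoint M P) (hMQ : ¬Disjoint M Q) :
    M ∈ Module.End.invtSubmodule (P.projection Q hPQ) := by
  obtain ⟨x, hxM, hxP, hx₀⟩ := exists_mem_mem_ne_zero_of_not_disjoint hMP
  obtain ⟨y, hyM, hyQ, hy₀⟩ := exists_mem_mem_ne_zero_of_not_disjoint hMQ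
  have hspan := eq_span_pair hM hxM hyM
    (linearIndependent_pair_of_disjoint hPQ.disjoint hxP hyQ hx₀ hy₀)
  rw [Module.End.mem_invtSubmodule]
  conv_lhs => rw [hspan]
  refine span_le.2 (Set.pair_subset ?_ ?_)
  · simpa [(projection_eq_self_iff hPQ x).2 hxP] using hxM
  · simp [(projection_apply_eq_zero_iff hPQ).2 hyQ]

theorem eq_span_projection (hPQ : IsCompl P Q) (hP : Disjoint W P) (hQ : Disjoint W Q)
    (hM : finrank k M = 2) (hMP : ¬Disjoint M P) (hMQ : ¬Disjoint M Q)
    (hwW : w ∈ W) (hwM : w ∈ M) (hw₀ : w ≠ 0) : M = span k {w, P.projection Q hPQ w} :=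
  eq_span_pair hM hwM (mem_invtSubmodule_projection hPQ hM hMP hMQ hwM)
    (linearIndependent_projection hPQ hP hQ hwW hw₀)

theorem commute_projection {P' Q' : Submodule k V} (hPQ : IsCompl P Q) (hPQ' : IsCompl P' Q')
    (hP' : finrank k P' = 2) (hQ' : finrank k Q' = 2) (hPP' : ¬Disjoint P' P)
    (hPQ'' : ¬Disjoint P' Q) (hQP' : ¬Disjoint Q' P) (hQQ' : ¬Disjoint Q' Q) :
    Commute (P'.projection Q' hPQ') (P.projection Q hPQ) := by
  rw [LinearMap.IsIdempotentElem.commute_iff (isIdempotentElem_projection hPQ'),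
    range_projection, ker_projection]
  exact ⟨mem_invtSubmodule_projection hPQ hP' hPP' hPQ'',
    mem_invtSubmodule_projection hPQ hQ' hQP' hQQ'⟩

theorem isCompl_of_disjoint (hV : finrank k V = 4) (hP : finrank k P = 2) (hQ : finrank k Q = 2)
    (h : Disjoint P Q) : IsCompl P Q :=
  have : FiniteDimensional k V := Module.finite_of_finrank_eq_succ hV
  (isCompl_iff_disjoint P Q (by omega)).2 h

theorem not_disjoint_of_regulus (hV : finrank k V = 4) {L M : Fin 3 → Submodule k V}
    {L' M' : Submodule k V} (hL : ∀ i, finrank k (L i) = 2) (hM : ∀ i, finrank k (M i) = 2)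
    (hL' : finrank k L' = 2) (hM' : finrank k M' = 2)
    (dL : Pairwise (Disjoint on L)) (dM : Pairwise (Disjoint on M))
    (hLM : ∀ i j, ¬Disjoint (L i) (M j)) (hL'M : ∀ j, ¬Disjoint L' (M j))
    (hM'L : ∀ i, ¬Disjoint M' (L i)) : ¬Disjoint L' M' := by
  have hML : ∀ i j, ¬Disjoint (M i) (L j) := fun i j h => hLM j i h.symm
  have cL := isCompl_of_disjoint hV (hL 1) (hL 2) (dL (by decide))
  have cM := isCompl_of_disjoint hV (hM 1) (hM 2) (dM (by decide))
  set π := (L 1).projection (L 2) cL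
  set ρ := (M 1).projection (M 2) cM
  have hcomm : Commute ρ π := commute_projection cL cM (hM 1) (hM 2) (hML 1 1) (hML 1 2)
    (hML 2 1) (hML 2 2)
  obtain ⟨w, hwL, hwM, hw₀⟩ := exists_mem_mem_ne_zero_of_not_disjoint (hLM 0 0)
  obtain ⟨v, hvM', hvL, hv₀⟩ := exists_mem_mem_ne_zero_of_not_disjoint (hM'L 0)
  obtain ⟨u, huL', huM, hu₀⟩ := exists_mem_mem_ne_zero_of_not_disjoint (hL'M 0)
  have hL₀ : L 0 = span k {w, ρ w} := eq_span_projection cM (dM (by decide)) (dM (by decide))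
    (hL 0) (hLM 0 1) (hLM 0 2) hwM hwL hw₀
  have hM₀ : M 0 = span k {w, π w} := eq_span_projection cL (dL (by decide)) (dL (by decide))
    (hM 0) (hML 0 1) (hML 0 2) hwL hwM hw₀
  obtain ⟨a, b, rfl⟩ := mem_span_pair.1 (hL₀ ▸ hvL)
  obtain ⟨c, d, rfl⟩ := mem_span_pair.1 (hM₀ ▸ huM)
  have hρ : ρ (c • w + d • π w) ∈ L' :=
    mem_invtSubmodule_projection cM hL' (hL'M 1) (hL'M 2) huL'
  have hπ : π (a • w + b • ρ w) ∈ M' :=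
    mem_invtSubmodule_projection cL hM' (hM'L 1) (hM'L 2) hvM'
  -- Since `ρ` and `π` commute, `c + d * π` and `a + b * ρ` carry `v` and `u` to the same vector.
  have hpoint : c • (a • w + b • ρ w) + d • π (a • w + b • ρ w) =
      a • (c • w + d • π w) + b • ρ (c • w + d • π w) := by
    have : π (ρ w) = ρ (π w) := congr($(hcomm.eq.symm) w)
    simp only [map_add, map_smul, this]
    module
  intro hdisj
  have hzero := disjoint_def.1 hdisj _
    (hpoint ▸ L'.add_mem (L'.smul_mem a huL') (L'.smul_mem b hρ))
    (M'.add_mem (M'.smul_mem c hvM') (M'.smul_mem d hπ))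
  obtain ⟨rfl, rfl⟩ := LinearIndependent.pair_iff.1
    (linearIndependent_projection cL (dL (by decide)) (dL (by decide)) hvL hv₀) c d hzero
  simp at hu₀

end Lines

section Transversals

open Submodule Polynomial Finset Function

variable {k V U ι : Type*} [Field k] [AddCommGroup V] [Module k V] [AddCommGroup U] [Module k U]
  {σ : k →+* k} {q : ℕ}

theorem eq_zero_of_isAlt {h : U →ₛₗ[σ] U →ₗ[k] k} (hσ : ∃ t, σ t ≠ t) (halt : h.IsAlt) : h = 0 := by
  obtain ⟨t, ht⟩ := hσ
  ext x y
  have : t = σ t ∨ h x y = 0 := by simpa [← halt.neg x y] using halt.neg x (t • y)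
  exact this.resolve_left ht.symm

theorem card_le_of_mul_pow_add_mul_eq_zero {a b : k} (ha : a ≠ 0) (hq : 1 < q) {S : Finset k}
    (hS : ∀ s ∈ S, a * s ^ q + b * s = 0) : #S ≤ q := by
  have hdeg : (C a * X ^ q + C b * X).natDegree = q := by
    rw [natDegree_add_eq_left_of_natDegree_lt, natDegree_C_mul_X_pow q a ha]
    rw [natDegree_C_mul_X_pow q a ha]
    exact (natDegree_C_mul_le b X).trans_lt (by rwa [natDegree_X])
  have hne : C a * X ^ q + C b * X ≠ 0 := by
    rintro h
    rw [h, natDegree_zero] at hdeg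
    omega
  rw [← hdeg]
  exact card_le_degree_of_subset_roots fun s hs => by simpa [mem_roots hne] using hS s hs

theorem exists_eq_smul_smul_add {a f v : U} (hv : v ∈ span k {a, f})
    (hva : LinearIndependent k ![v, a]) : ∃ s y : k, y ≠ 0 ∧ v = y • (s • a + f) := by
  obtain ⟨x, y, rfl⟩ := mem_span_pair.1 hv
  have hy : y ≠ 0 := by
    rintro rfl
    exact one_ne_zero (LinearIndependent.pair_iff.1 hva 1 (-x) (by simp)).1
  exact ⟨x / y, y, hy, by rw [smul_add, smul_smul, mul_div_cancel₀ x hy]⟩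

theorem apply_ne_zero_of_separatingLeft {h : U →ₛₗ[σ] U →ₗ[k] k} (hsep : h.SeparatingLeft)
    {u v : U} (hspan : ∀ x, x ∈ span k {u, v}) (hu₀ : u ≠ 0) (hu : h u u = 0) : h u v ≠ 0 := by
  refine fun huv => hu₀ (hsep u fun x => ?_)
  obtain ⟨a, b, rfl⟩ := mem_span_pair.1 (hspan x)
  simp [hu, huv]

theorem card_le_of_isotropic {h : U →ₛₗ[σ] U →ₗ[k] k} (hσ : ∀ t, σ t = t ^ q) (hq : 1 < q)
    (hU : finrank k U = 2) (hsep : h.SeparatingLeft) {T : Finset ι} {v : ι → U}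
    (hv : ∀ i ∈ T, h (v i) (v i) = 0)
    (hind : ∀ i ∈ T, ∀ j ∈ T, i ≠ j → LinearIndependent k ![v i, v j]) : #T ≤ q + 1 := by
  classical
  rcases le_or_gt #T 1 with hT | hT
  · omega
  obtain ⟨i₀, hi₀, i₁, hi₁, hne⟩ := one_lt_card.1 hT
  have hspan (u : U) : u ∈ span k {v i₀, v i₁} := by
    rw [← eq_span_pair (finrank_top k U ▸ hU) mem_top mem_top (hind i₀ hi₀ i₁ hi₁ hne)]
    exact mem_top
  have hform : h (v i₀) (v i₁) ≠ 0 := apply_ne_zero_of_separatingLeft hsep hspan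
    ((hind i₀ hi₀ i₁ hi₁ hne).ne_zero 0) (hv i₀ hi₀)
  have hcoord : ∀ i ∈ T.erase i₀, ∃ s y : k, y ≠ 0 ∧ v i = y • (s • v i₀ + v i₁) := fun i hi =>
    exists_eq_smul_smul_add (hspan _) (hind i (mem_of_mem_erase hi) i₀ hi₀ (ne_of_mem_erase hi))
  choose! s y hy hvs using hcoord
  have hinj : Set.InjOn s (T.erase i₀) := by
    intro i hi j hj hij
    by_contra hne'
    have := LinearIndependent.pair_iff.1 (hind i (mem_of_mem_erase hi) j (mem_of_mem_erase hj) hne')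
      (y j) (-y i) (by rw [hvs i hi, hvs j hj, hij]; module)
    exact hy j hj this.1
  have hroot : ∀ t ∈ (T.erase i₀).image s, h (v i₀) (v i₁) * t ^ q + h (v i₁) (v i₀) * t = 0 := by
    simp only [mem_image]
    rintro _ ⟨i, hi, rfl⟩
    have hiso := hv i (mem_of_mem_erase hi)
    rw [hvs i hi] at hiso
    simp only [smul_add, map_add, map_smulₛₗ, LinearMap.add_apply,
      LinearMap.smul_apply, smul_eq_mul, hσ, hv i₀ hi₀, hv i₁ hi₁, mul_zero, zero_add,
      add_zero] at hiso
    refine mul_left_cancel₀ (pow_ne_zero (q + 1) (hy i hi)) ?_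
    linear_combination hiso
  have := card_le_of_mul_pow_add_mul_eq_zero hform hq hroot
  rw [card_image_of_injOn hinj, card_erase_of_mem hi₀] at this
  omega

theorem separatingLeft_domRestrict_compl₂_projection {B : V →ₛₗ[σ] V →ₗ[k] k}
    {W P Q : Submodule k V} (hB : B.SeparatingLeft) (hWP : IsCompl W P) (hWQ : IsCompl W Q)
    (hPQ : IsCompl P Q) (hW : ∀ x ∈ W, ∀ y ∈ W, B x y = 0) :
    ((B.compl₂ (P.projection Q hPQ)).domRestrict₁₂ W W).SeparatingLeft := by
  rintro ⟨x, hx⟩ hxW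
  refine Subtype.ext (hB x fun z => ?_)
  obtain ⟨u, v, hu, hv, rfl⟩ := codisjoint_iff_exists_add_eq.1 hWP.codisjoint z
  obtain ⟨u', w, hu', hw, rfl⟩ := codisjoint_iff_exists_add_eq.1 hWQ.codisjoint v
  have hproj : P.projection Q hPQ u' = u' + w := by
    rw [← (projection_eq_self_iff hPQ _).2 hv, map_add, (projection_apply_eq_zero_iff hPQ).2 hw,
      add_zero]
  have hxu' : B x (P.projection Q hPQ u') = 0 := hxW ⟨u', hu'⟩
  rw [map_add, hW x hx u hu, ← hproj, hxu', add_zero]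

theorem card_le_of_transversals {B : V →ₛₗ[σ] V →ₗ[k] k} (hσ : ∀ t, σ t = t ^ q) (hq : 1 < q)
    (hV : finrank k V = 4) (hB : B.SeparatingLeft) {L : Fin 3 → Submodule k V}
    (hL : ∀ i, finrank k (L i) = 2) (dL : Pairwise (Disjoint on L))
    (hL₀ : ∀ x ∈ L 0, ∀ y ∈ L 0, B x y = 0) {T : Finset (Submodule k V)}
    (hT : ∀ M ∈ T, finrank k M = 2) (hTiso : ∀ M ∈ T, ∀ x ∈ M, ∀ y ∈ M, B x y = 0)
    (hTL : ∀ M ∈ T, ∀ i, ¬Disjoint M (L i)) : #T ≤ q + 1 := by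
  have c (i j) (hij : i ≠ j) : IsCompl (L i) (L j) :=
    isCompl_of_disjoint hV (hL i) (hL j) (dL hij)
  have c₁₂ := c 1 2 (by decide)
  have hmeet : ∀ M ∈ T, ∃ v : L 0, (v : V) ∈ M ∧ (v : V) ≠ 0 := by
    intro M hM
    obtain ⟨v, hvM, hv, hv₀⟩ := exists_mem_mem_ne_zero_of_not_disjoint (hTL M hM 0)
    exact ⟨⟨v, hv⟩, hvM, hv₀⟩
  choose! v hvM hv₀ using hmeet
  refine card_le_of_isotropic hσ hq (hL 0) (v := v)
    (separatingLeft_domRestrict_compl₂_projection hB (c 0 1 (by decide)) (c 0 2 (by decide)) c₁₂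
      hL₀) ?_ ?_
  · intro M hM
    exact hTiso M hM _ (hvM M hM) _ (mem_invtSubmodule_projection c₁₂ (hT M hM) (hTL M hM 1)
      (hTL M hM 2) (hvM M hM))
  · intro M hM N hN hMN
    have hv₀' : v M ≠ 0 := fun h => hv₀ M hM (congrArg Subtype.val h)
    refine (LinearIndependent.pair_iff' hv₀').2 fun a ha => hMN ?_
    have hspan : ∀ K ∈ T, (v N : V) ∈ K →
        K = span k {(v N : V), (L 1).projection (L 2) c₁₂ (v N)} :=
      fun K hK hvK => eq_span_projection c₁₂ (dL (by decide)) (dL (by decide)) (hT K hK)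
        (hTL K hK 1) (hTL K hK 2) (v N).2 hvK (hv₀ N hN)
    rw [hspan M hM (ha ▸ M.smul_mem a (hvM M hM)), ← hspan N hN (hvM N hN)]

end Transversals

section FrobeniusForm

variable {k n : Type*} [Field k] [Fintype n] [DecidableEq n] (p e : ℕ) [ExpChar k p]

/-- The polarisation `∑ i j, A i j * x i ^ (p ^ e) * y j` of the Frobenius form with matrix `A`,
as a form that is semilinear in `x` with respect to the `e`-th power of the Frobenius and linear
in `y`. -/
noncomputable def frobSesq (A : Matrix n n k) :
    (n → k) →ₛₗ[iterateFrobenius k p e] (n → k) →ₗ[k] k :=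
  Matrix.toLinearMapₛₗ₂' k (iterateFrobenius k p e) (RingHom.id k) A

variable {p e}

theorem frobSesq_self (A : Matrix (Fin 4) (Fin 4) k) (x : Fin 4 → k) :
    frobSesq p e A x x = frobForm (p ^ e) A x := by
  simp only [frobSesq, Matrix.toLinearMapₛₗ₂'_apply, iterateFrobenius_def, RingHom.id_apply,
    smul_eq_mul, frobForm]
  exact Finset.sum_congr rfl fun i _ => Finset.sum_congr rfl fun j _ => by ring

theorem frobSesq_single (A : Matrix n n k) (x : n → k) (j : n) :
    frobSesq p e A x (Pi.single j 1) = Matrix.vecMul (fun i => x i ^ p ^ e) A j := by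
  simp [frobSesq, Matrix.toLinearMapₛₗ₂'_apply, iterateFrobenius_def, Matrix.vecMul,
    dotProduct, Pi.single_apply]

theorem separatingLeft_frobSesq {A : Matrix n n k} (hA : IsUnit A) :
    (frobSesq p e A).SeparatingLeft := by
  intro x hx
  have hpow : (fun i => x i ^ p ^ e) = 0 := by
    refine Matrix.vecMul_injective_of_isUnit hA ((funext fun j => ?_).trans (A.zero_vecMul).symm)
    exact (frobSesq_single A x j).symm.trans (hx _)
  exact funext fun i => eq_zero_of_pow_eq_zero (congrFun hpow i)

theorem IsLineOn.frobSesq_eq_zero (hfix : ∃ t : k, t ^ p ^ e ≠ t) {A : Matrix (Fin 4) (Fin 4) k}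
    {L : Submodule k (Fin 4 → k)} (hL : IsLineOn (extremalCone k (p ^ e) A) L) :
    ∀ x ∈ L, ∀ y ∈ L, frobSesq p e A x y = 0 := by
  have hzero : (frobSesq p e A).domRestrict₁₂ L L = 0 :=
    eq_zero_of_isAlt hfix fun x => (frobSesq_self A x).trans (hL.2 x.2)
  exact fun x hx y hy => congr($hzero ⟨x, hx⟩ ⟨y, hy⟩)

end FrobeniusForm

section LineIncidence

open Finset Function

variable {k : Type*} [Field k] {d : ℕ} {L M : Submodule k (Fin 4 → k)}
  {𝒜 ℬ P Q S T : Finset (Submodule k (Fin 4 → k))} {X : Set (Fin 4 → k)}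

theorem skewLine_iff_disjoint : SkewLine L M ↔ Disjoint L M :=
  disjoint_iff.symm

theorem meetsLine_iff_not_disjoint : MeetsLine L M ↔ ¬Disjoint L M :=
  disjoint_iff.not.symm

theorem MeetsLine.symm (h : MeetsLine L M) : MeetsLine M L :=
  (inf_comm M L).trans_ne h

theorem exists_injective_of_card_eq {α : Type*} {S : Finset α} {n : ℕ} (hS : #S = n) :
    ∃ f : Fin n → α, Injective f ∧ ∀ i, f i ∈ S :=
  ⟨Subtype.val ∘ (S.equivFinOfCardEq hS).symm, Subtype.val_injective.comp (Equiv.injective _),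
    fun _ => Subtype.prop _⟩

theorem pairwise_disjoint_comp {ι : Type*} {f : ι → Submodule k (Fin 4 → k)} (hf : Injective f)
    (hfS : ∀ i, f i ∈ S) (hS : ∀ L ∈ S, ∀ M ∈ S, L ≠ M → SkewLine L M) :
    Pairwise (Disjoint on f) :=
  fun i j hij => skewLine_iff_disjoint.1 (hS _ (hfS i) _ (hfS j) (hf.ne hij))

section Extremal

variable {p e : ℕ} [ExpChar k p] {A : Matrix (Fin 4) (Fin 4) k}

theorem one_lt_pow_of_exists_ne (hfix : ∃ t : k, t ^ p ^ e ≠ t) : 1 < p ^ e := by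
  obtain ⟨t, ht⟩ := hfix
  exact lt_of_le_of_ne (pow_pos (expChar_pos k p) e) fun h => ht (by rw [← h, pow_one])

theorem card_le_of_isBiclique_meetsLine (hfix : ∃ t : k, t ^ p ^ e ≠ t) (hA : IsUnit A)
    (cS : #S = 3) (hS : ∀ L ∈ S, IsLineOn (extremalCone k (p ^ e) A) L)
    (sS : ∀ L ∈ S, ∀ M ∈ S, L ≠ M → SkewLine L M)
    (hT : ∀ M ∈ T, IsLineOn (extremalCone k (p ^ e) A) M) (hST : IsBiclique MeetsLine S T) :
    #T ≤ p ^ e + 1 := by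
  obtain ⟨L, hL, hLS⟩ := exists_injective_of_card_eq cS
  exact card_le_of_transversals (iterateFrobenius_def p e) (one_lt_pow_of_exists_ne hfix)
    (finrank_fin_fun k) (separatingLeft_frobSesq hA) (fun i => (hS _ (hLS i)).1)
    (pairwise_disjoint_comp hL hLS sS)
    ((hS _ (hLS 0)).frobSesq_eq_zero hfix) (fun M hM => (hT M hM).1)
    (fun M hM => (hT M hM).frobSesq_eq_zero hfix)
    fun M hM i => meetsLine_iff_not_disjoint.1 (hST _ (hLS i) M hM).symm

theorem meetsLine_of_regulus (hS : ∀ L ∈ S, IsLine L) (hT : ∀ M ∈ T, IsLine M) (cS : #S = 3)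
    (cT : #T = 3) (sS : ∀ L ∈ S, ∀ M ∈ S, L ≠ M → SkewLine L M)
    (sT : ∀ L ∈ T, ∀ M ∈ T, L ≠ M → SkewLine L M) (hST : IsBiclique MeetsLine S T)
    (hL : IsLine L) (hM : IsLine M) (hLT : ∀ M ∈ T, MeetsLine L M) (hMS : ∀ L ∈ S, MeetsLine L M) :
    MeetsLine L M := by
  obtain ⟨f, hf, hfS⟩ := exists_injective_of_card_eq cS
  obtain ⟨g, hg, hgT⟩ := exists_injective_of_card_eq cT
  simp only [meetsLine_iff_not_disjoint] at hLT
  exact meetsLine_iff_not_disjoint.2 <| not_disjoint_of_regulus (finrank_fin_fun k)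
    (fun i => hS _ (hfS i)) (fun j => hT _ (hgT j)) hL hM (pairwise_disjoint_comp hf hfS sS)
    (pairwise_disjoint_comp hg hgT sT)
    (fun i j => meetsLine_iff_not_disjoint.1 (hST _ (hfS i) _ (hgT j)))
    (fun j => hLT _ (hgT j)) fun i => meetsLine_iff_not_disjoint.1 (hMS _ (hfS i)).symm

theorem isRegulusIncidence_meetsLine
    [DecidableRel (MeetsLine : Submodule k (Fin 4 → k) → Submodule k (Fin 4 → k) → Prop)]
    (hfix : ∃ t : k, t ^ p ^ e ≠ t) (hA : IsUnit A)
    (h𝒜 : ∀ L ∈ 𝒜, IsLineOn (extremalCone k (p ^ e) A) L)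
    (hℬ : ∀ M ∈ ℬ, IsLineOn (extremalCone k (p ^ e) A) M)
    (s𝒜 : ∀ L ∈ 𝒜, ∀ M ∈ 𝒜, L ≠ M → SkewLine L M)
    (sℬ : ∀ L ∈ ℬ, ∀ M ∈ ℬ, L ≠ M → SkewLine L M) :
    IsRegulusIncidence (p ^ e + 1) MeetsLine 𝒜 ℬ where
  card_commonNeighbors_le S hS cS :=
    card_le_of_isBiclique_meetsLine hfix hA cS (fun L hL => h𝒜 L (hS hL))
      (fun L hL M hM => s𝒜 L (hS hL) M (hS hM)) (fun M hM => hℬ M (commonNeighbors_subset hM))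
      fun L hL M hM => (mem_commonNeighbors.1 hM).2 L hL
  card_commonNeighbors_swap_le T hT cT :=
    card_le_of_isBiclique_meetsLine hfix hA cT (fun M hM => hℬ M (hT hM))
      (fun L hL M hM => sℬ L (hT hL) M (hT hM)) (fun L hL => h𝒜 L (commonNeighbors_subset hL))
      fun M hM L hL => MeetsLine.symm ((mem_commonNeighbors.1 hL).2 M hM)
  isBiclique_commonNeighbors S hS T hT cS cT hST L hL M hM := by
    rw [mem_commonNeighbors] at hL hM
    exact meetsLine_of_regulus (fun L hL => (h𝒜 L (hS hL)).1) (fun M hM => (hℬ M (hT hM)).1) cS cT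
      (fun L hL M hM => s𝒜 L (hS hL) M (hS hM)) (fun L hL M hM => sℬ L (hT hL) M (hT hM)) hST
      (h𝒜 L hL.1).1 (hℬ M hM.1).1 hL.2 hM.2

end Extremal

theorem IsDoubleTwoD.isDoubleIncidence
    [DecidableRel (MeetsLine : Submodule k (Fin 4 → k) → Submodule k (Fin 4 → k) → Prop)]
    (h : IsDoubleTwoD d (𝒜 : Set (Submodule k (Fin 4 → k))) ℬ) :
    IsDoubleIncidence d MeetsLine 𝒜 ℬ := by
  obtain ⟨c𝒜, cℬ, -, -, -, -, d𝒜, dℬ⟩ := h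
  refine ⟨by rwa [Set.ncard_coe_finset] at c𝒜, by rwa [Set.ncard_coe_finset] at cℬ, ?_, ?_⟩
  · intro L hL
    rw [← d𝒜 L hL, ← Set.ncard_coe_finset, coe_bipartiteAbove]
    rfl
  · intro M hM
    rw [← dℬ M hM, ← Set.ncard_coe_finset, coe_bipartiteBelow]
    rfl

theorem IsDoubleTwoD.disjoint {𝒜 ℬ : Set (Submodule k (Fin 4 → k))} (h : IsDoubleTwoD d 𝒜 ℬ) :
    Disjoint 𝒜 ℬ := by
  obtain ⟨-, -, -, -, -, sℬ, d𝒜, -⟩ := h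
  refine Set.disjoint_left.2 fun L hL𝒜 hLℬ => ?_
  have hsub : {M ∈ ℬ | MeetsLine L M} ⊆ {L} := fun M hM => by
    by_contra hne
    exact hM.2 (sℬ L hLℬ M hM.1 (Ne.symm hne))
  have := Set.ncard_le_ncard hsub
  rw [d𝒜 L hL𝒜, Set.ncard_singleton] at this
  omega

theorem IsDoubleTwoD.ncard_union (h : IsDoubleTwoD d (𝒜 : Set (Submodule k (Fin 4 → k))) ℬ) :
    (𝒜 ∪ ℬ : Set (Submodule k (Fin 4 → k))).ncard = 4 * d := by
  rw [Set.ncard_union_eq h.disjoint, h.1, h.2.1]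
  ring

theorem IsDoubleTwoD.isQuadricConfig_union
    (h : IsDoubleTwoD d (𝒜 : Set (Submodule k (Fin 4 → k))) ℬ)
    (hX : ∀ L ∈ (𝒜 ∪ ℬ : Set (Submodule k (Fin 4 → k))), IsLineOn X L) (hP : P ⊆ 𝒜) (hQ : Q ⊆ ℬ)
    (cP : #P = d) (cQ : #Q = d) (hPQ : IsBiclique MeetsLine P Q) :
    IsQuadricConfig d X (P ∪ Q : Set (Submodule k (Fin 4 → k))) := by
  have hdisj := h.disjoint.mono (coe_subset.2 hP) (coe_subset.2 hQ)
  obtain ⟨-, -, -, -, s𝒜, sℬ, -, -⟩ := h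
  refine ⟨?_, fun L hL => hX L (hL.imp (@hP L) (@hQ L)), P, Q, rfl, ?_, ?_,
    fun L hL M hM => s𝒜 L (hP hL) M (hP hM), fun L hL M hM => sℬ L (hQ hL) M (hQ hM), hPQ⟩
  · rw [Set.ncard_union_eq hdisj, Set.ncard_coe_finset, Set.ncard_coe_finset, cP, cQ, two_mul]
  · rw [Set.ncard_coe_finset, cP]
  · rw [Set.ncard_coe_finset, cQ]

theorem subset_and_subset_of_meetsLine {𝒜 ℬ ℒ ℳ : Set (Submodule k (Fin 4 → k))}
    (s𝒜 : ∀ L ∈ 𝒜, ∀ M ∈ 𝒜, L ≠ M → SkewLine L M) (sℬ : ∀ L ∈ ℬ, ∀ M ∈ ℬ, L ≠ M → SkewLine L M)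
    (hdisj : Disjoint ℒ ℳ) (hℒ : ℒ ⊆ 𝒜 ∪ ℬ) (hℳ : ℳ ⊆ 𝒜 ∪ ℬ)
    (hmeet : ∀ L ∈ ℒ, ∀ M ∈ ℳ, MeetsLine L M) (hne : ℳ.Nonempty) (hL : L ∈ ℒ) (hL𝒜 : L ∈ 𝒜) :
    ℒ ⊆ 𝒜 ∧ ℳ ⊆ ℬ := by
  have hℳℬ : ℳ ⊆ ℬ := fun M hM => (hℳ hM).resolve_left fun hM𝒜 =>
    hmeet L hL M hM (s𝒜 L hL𝒜 M hM𝒜 (hdisj.ne_of_mem hL hM))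
  obtain ⟨M, hM⟩ := hne
  exact ⟨fun K hK => (hℒ hK).resolve_right fun hKℬ =>
    hmeet K hK M hM (sℬ K hKℬ M (hℳℬ hM) (hdisj.ne_of_mem hK hM)), hℳℬ⟩

theorem IsQuadricConfig.exists_isBiclique (hd : 0 < d) {S : Set (Submodule k (Fin 4 → k))}
    (hS : IsQuadricConfig d X S) (s𝒜 : ∀ L ∈ 𝒜, ∀ M ∈ 𝒜, L ≠ M → SkewLine L M)
    (sℬ : ∀ L ∈ ℬ, ∀ M ∈ ℬ, L ≠ M → SkewLine L M) (hS𝒜ℬ : S ⊆ ↑𝒜 ∪ ↑ℬ) :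
    ∃ P ⊆ 𝒜, ∃ Q ⊆ ℬ, #P = d ∧ #Q = d ∧ IsBiclique MeetsLine P Q ∧ S = ↑P ∪ ↑Q := by
  obtain ⟨cS, -, ℒ, ℳ, rfl, cℒ, cℳ, -, -, hmeet⟩ := hS
  lift ℒ to Finset (Submodule k (Fin 4 → k)) using Set.finite_of_ncard_pos (by omega)
  lift ℳ to Finset (Submodule k (Fin 4 → k)) using Set.finite_of_ncard_pos (by omega)
  have hdisj : Disjoint (ℒ : Set (Submodule k (Fin 4 → k))) ℳ := by
    rw [Set.disjoint_iff_inter_eq_empty, ← Set.ncard_eq_zero]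
    have := Set.ncard_union_add_ncard_inter (ℒ : Set (Submodule k (Fin 4 → k))) ℳ
    omega
  obtain ⟨hℒ, hℳ⟩ := Set.union_subset_iff.1 hS𝒜ℬ
  have hℳ₀ := Set.nonempty_of_ncard_ne_zero (cℳ.trans_ne hd.ne')
  obtain ⟨L, hL⟩ := Set.nonempty_of_ncard_ne_zero (cℒ.trans_ne hd.ne')
  rw [Set.ncard_coe_finset] at cℒ cℳ
  rcases hℒ hL with hL𝒜 | hLℬ
  · obtain ⟨hℒ𝒜, hℳℬ⟩ := subset_and_subset_of_meetsLine s𝒜 sℬ hdisj hℒ hℳ hmeet hℳ₀ hL hL𝒜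
    exact ⟨ℒ, coe_subset.1 hℒ𝒜, ℳ, coe_subset.1 hℳℬ, cℒ, cℳ, hmeet, rfl⟩
  · rw [Set.union_comm] at hℒ hℳ
    obtain ⟨hℒℬ, hℳ𝒜⟩ := subset_and_subset_of_meetsLine sℬ s𝒜 hdisj hℒ hℳ hmeet hℳ₀ hL hLℬ
    exact ⟨ℳ, coe_subset.1 hℳ𝒜, ℒ, coe_subset.1 hℒℬ, cℳ, cℒ,
      fun M hM L hL => (hmeet L hL M hM).symm, Set.union_comm _ _⟩

theorem IsDoubleTwoD.exists_isQuadricConfig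
    [DecidableRel (MeetsLine : Submodule k (Fin 4 → k) → Submodule k (Fin 4 → k) → Prop)]
    (h : IsDoubleTwoD d (𝒜 : Set (Submodule k (Fin 4 → k))) ℬ)
    (hR : IsRegulusIncidence d MeetsLine 𝒜 ℬ)
    (hX : ∀ L ∈ (𝒜 ∪ ℬ : Set (Submodule k (Fin 4 → k))), IsLineOn X L) (hd : 3 ≤ d)
    (hd' : 10 < d ∨ d < 5) :
    ∃ S₁ S₂ : Set (Submodule k (Fin 4 → k)), IsQuadricConfig d X S₁ ∧ IsQuadricConfig d X S₂ ∧
      S₁ ∩ S₂ = ∅ ∧ S₁ ∪ S₂ = ↑𝒜 ∪ ↑ℬ := by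
  classical
  obtain ⟨P, hP, Q, hQ, cP, cQ, hPQ, hPQ'⟩ :=
    h.isDoubleIncidence.exists_biclique_partition hR hd hd'
  have cP' : #(𝒜 \ P) = d := by
    rw [card_sdiff_of_subset hP, h.isDoubleIncidence.card_left, cP, two_mul, Nat.add_sub_cancel]
  have cQ' : #(ℬ \ Q) = d := by
    rw [card_sdiff_of_subset hQ, h.isDoubleIncidence.card_right, cQ, two_mul, Nat.add_sub_cancel]
  have hdisj := disjoint_coe.1 h.disjoint
  refine ⟨↑P ∪ ↑Q, ↑(𝒜 \ P) ∪ ↑(ℬ \ Q), h.isQuadricConfig_union hX hP hQ cP cQ hPQ,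
    h.isQuadricConfig_union hX sdiff_subset sdiff_subset cP' cQ' hPQ', ?_, ?_⟩
  · rw [← Set.disjoint_iff_inter_eq_empty]
    norm_cast
    simp only [disjoint_union_left, disjoint_union_right]
    exact ⟨⟨disjoint_sdiff, (hdisj.mono sdiff_subset hQ).symm⟩,
      hdisj.mono hP sdiff_subset, disjoint_sdiff⟩
  · rw [Set.union_union_union_comm, ← coe_union, ← coe_union, union_sdiff_of_subset hP,
      union_sdiff_of_subset hQ]

theorem IsQuadricConfig.eq_or_eq
    [DecidableRel (MeetsLine : Submodule k (Fin 4 → k) → Submodule k (Fin 4 → k) → Prop)]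
    (h : IsDoubleTwoD d (𝒜 : Set (Submodule k (Fin 4 → k))) ℬ)
    (hR : IsRegulusIncidence d MeetsLine 𝒜 ℬ) (hd : 5 ≤ d)
    {S₁ S₂ T : Set (Submodule k (Fin 4 → k))} (hT : IsQuadricConfig d X T)
    (hS₁ : IsQuadricConfig d X S₁) (hS₂ : IsQuadricConfig d X S₂) (hS : S₁ ∪ S₂ = ↑𝒜 ∪ ↑ℬ)
    (hT𝒜ℬ : T ⊆ ↑𝒜 ∪ ↑ℬ) : T = S₁ ∨ T = S₂ := by
  classical
  have ⟨_, _, _, _, s𝒜, sℬ, _, _⟩ := h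
  obtain ⟨P, hP, Q, hQ, cP, cQ, hPQ, rfl⟩ := hT.exists_isBiclique (by omega) s𝒜 sℬ hT𝒜ℬ
  obtain ⟨P₁, hP₁, Q₁, hQ₁, cP₁, cQ₁, hPQ₁, rfl⟩ :=
    hS₁.exists_isBiclique (by omega) s𝒜 sℬ (Set.subset_union_left.trans hS.subset)
  obtain ⟨P₂, hP₂, Q₂, hQ₂, cP₂, cQ₂, hPQ₂, rfl⟩ :=
    hS₂.exists_isBiclique (by omega) s𝒜 sℬ (Set.subset_union_right.trans hS.subset)
  have hcover : P = P ∩ P₁ ∪ P ∩ P₂ := by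
    rw [← inter_union_distrib_left, eq_comm, inter_eq_left]
    intro L hL
    have hLℬ : L ∉ ℬ := Finset.disjoint_left.1 (disjoint_coe.1 h.disjoint) (hP hL)
    have hLS : L ∈ (↑P₁ ∪ ↑Q₁ ∪ (↑P₂ ∪ ↑Q₂) : Set _) := hS ▸ Or.inl (hP hL)
    have hLQ₁ : L ∉ Q₁ := fun hLQ₁ => hLℬ (hQ₁ hLQ₁)
    have hLQ₂ : L ∉ Q₂ := fun hLQ₂ => hLℬ (hQ₂ hLQ₂)
    simpa [hLQ₁, hLQ₂] using hLS
  have hcard := card_union_le (P ∩ P₁) (P ∩ P₂)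
  rw [← hcover, cP] at hcard
  obtain h₁ | h₂ : 3 ≤ #(P ∩ P₁) ∨ 3 ≤ #(P ∩ P₂) := by omega
  · obtain ⟨rfl, rfl⟩ := hR.biclique_unique (by omega) hP hP₁ hQ hQ₁ cP cP₁ cQ cQ₁ hPQ hPQ₁ h₁
    exact .inl rfl
  · obtain ⟨rfl, rfl⟩ := hR.biclique_unique (by omega) hP hP₂ hQ hQ₂ cP cP₂ cQ cQ₂ hPQ hPQ₂ h₂
    exact .inr rfl

theorem IsDoubleTwoD.isQuadricConfig_pair_unique
    [DecidableRel (MeetsLine : Submodule k (Fin 4 → k) → Submodule k (Fin 4 → k) → Prop)]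
    (h : IsDoubleTwoD d (𝒜 : Set (Submodule k (Fin 4 → k))) ℬ)
    (hR : IsRegulusIncidence d MeetsLine 𝒜 ℬ) (hd : 5 ≤ d)
    {S₁ S₂ T₁ T₂ : Set (Submodule k (Fin 4 → k))}
    (hS₁ : IsQuadricConfig d X S₁) (hS₂ : IsQuadricConfig d X S₂)
    (hT₁ : IsQuadricConfig d X T₁) (hT₂ : IsQuadricConfig d X T₂)
    (hS : S₁ ∪ S₂ = ↑𝒜 ∪ ↑ℬ) (hT : T₁ ∪ T₂ = ↑𝒜 ∪ ↑ℬ) :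
    (S₁ = T₁ ∧ S₂ = T₂) ∨ (S₁ = T₂ ∧ S₂ = T₁) := by
  have hT₁₂ : T₁ ≠ T₂ := by
    rintro rfl
    have := h.ncard_union
    rw [← hT, Set.union_self, hT₁.1] at this
    omega
  have h₁ := hT₁.eq_or_eq h hR hd hS₁ hS₂ hS (Set.subset_union_left.trans hT.subset)
  have h₂ := hT₂.eq_or_eq h hR hd hS₁ hS₂ hS (Set.subset_union_right.trans hT.subset)
  grind

end LineIncidence

theorem exists_pow_ne_self (k : Type*) [Field k] [Infinite k] {q : ℕ} (hq : 1 < q) :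
    ∃ t : k, t ^ q ≠ t := by
  by_contra! h
  refine FiniteField.X_pow_card_sub_X_ne_zero k hq (Polynomial.funext fun t => ?_)
  simp [h t]

theorem double_2d_is_union_of_quadric_configs_general {k : Type*} [Field k] (p e q : ℕ)
    [ExpChar k p] (hq : q = p ^ e) (hfix : ∃ t : k, t ^ q ≠ t)
    (A : Matrix (Fin 4) (Fin 4) k) (hA : IsUnit A)
    (𝒜 ℬ : Set (Submodule k (Fin 4 → k)))
    (hdbl : IsDoubleTwoD (q + 1) 𝒜 ℬ)
    (hX : ∀ L ∈ 𝒜 ∪ ℬ, IsLineOn (extremalCone k q A) L) :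
    ((10 < q + 1 ∨ q + 1 < 5) →
      ∃ S₁ S₂ : Set (Submodule k (Fin 4 → k)),
        IsQuadricConfig (q + 1) (extremalCone k q A) S₁ ∧
        IsQuadricConfig (q + 1) (extremalCone k q A) S₂ ∧
        S₁ ∩ S₂ = ∅ ∧ S₁ ∪ S₂ = 𝒜 ∪ ℬ) ∧
    (5 ≤ q + 1 →
      ∀ S₁ S₂ T₁ T₂ : Set (Submodule k (Fin 4 → k)),
        IsQuadricConfig (q + 1) (extremalCone k q A) S₁ →
        IsQuadricConfig (q + 1) (extremalCone k q A) S₂ →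
        IsQuadricConfig (q + 1) (extremalCone k q A) T₁ →
        IsQuadricConfig (q + 1) (extremalCone k q A) T₂ →
        S₁ ∪ S₂ = 𝒜 ∪ ℬ → T₁ ∪ T₂ = 𝒜 ∪ ℬ →
        (S₁ = T₁ ∧ S₂ = T₂) ∨ (S₁ = T₂ ∧ S₂ = T₁)) := by
  classical
  subst hq
  have hq : 1 < p ^ e := one_lt_pow_of_exists_ne hfix
  have ⟨c𝒜, cℬ, _, _, s𝒜, sℬ, _, _⟩ := hdbl
  lift 𝒜 to Finset (Submodule k (Fin 4 → k)) using Set.finite_of_ncard_pos (by omega)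
  lift ℬ to Finset (Submodule k (Fin 4 → k)) using Set.finite_of_ncard_pos (by omega)
  have hR := isRegulusIncidence_meetsLine hfix hA (fun L hL => hX L (.inl hL))
    (fun L hL => hX L (.inr hL)) s𝒜 sℬ
  exact ⟨hdbl.exists_isQuadricConfig hR hX (by omega),
    fun hd _ _ _ _ => hdbl.isQuadricConfig_pair_unique hR hd⟩

/-- Let `X` be a smooth extremal surface of degree `d = q+1`
and let `(𝒜, ℬ)` be a double `2d` all of whose `4d` lines lie on `X`.
If `d > 10` or `d < 5`, the lines of `𝒜 ∪ ℬ` can be partitioned into two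
quadric configurations on `X`.  Moreover, for `d ≥ 5`, a pair of quadric
configurations with union the lines of a double `2d` on `X` is unique. -/
theorem double_2d_is_union_of_quadric_configs {k : Type*} [Field k] [IsAlgClosed k]
    (p e q : ℕ) (hp : p.Prime) (hchar : CharP k p) (he : 1 ≤ e) (hq : q = p ^ e)
    (A : Matrix (Fin 4) (Fin 4) k) (hA : IsUnit A)
    (𝒜 ℬ : Set (Submodule k (Fin 4 → k)))
    (hdbl : IsDoubleTwoD (q + 1) 𝒜 ℬ)
    (hX : ∀ L ∈ 𝒜 ∪ ℬ, IsLineOn (extremalCone k q A) L) :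
    ((10 < q + 1 ∨ q + 1 < 5) →
      ∃ S₁ S₂ : Set (Submodule k (Fin 4 → k)),
        IsQuadricConfig (q + 1) (extremalCone k q A) S₁ ∧
        IsQuadricConfig (q + 1) (extremalCone k q A) S₂ ∧
        S₁ ∩ S₂ = ∅ ∧ S₁ ∪ S₂ = 𝒜 ∪ ℬ) ∧
    (5 ≤ q + 1 →
      ∀ S₁ S₂ T₁ T₂ : Set (Submodule k (Fin 4 → k)),
        IsQuadricConfig (q + 1) (extremalCone k q A) S₁ →
        IsQuadricConfig (q + 1) (extremalCone k q A) S₂ →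
        IsQuadricConfig (q + 1) (extremalCone k q A) T₁ →
        IsQuadricConfig (q + 1) (extremalCone k q A) T₂ →
        S₁ ∪ S₂ = 𝒜 ∪ ℬ → T₁ ∪ T₂ = 𝒜 ∪ ℬ →
        (S₁ = T₁ ∧ S₂ = T₂) ∨ (S₁ = T₂ ∧ S₂ = T₁)) := by
  have := ExpChar.prime hp (R := k)
  exact double_2d_is_union_of_quadric_configs_general p e q hq
    (exists_pow_ne_self k (hq ▸ Nat.one_lt_pow (by omega) hp.one_lt)) A hA 𝒜 ℬ hdbl hX
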